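/- The set TS³ is closed under the binary operation ·: for all g₁ = (q₁,p₁) and g₂ = (q₂,p₂) with qᵢ ∈ ℝ⁴, ‖qᵢ‖ = 1 and qᵢᵀpᵢ = 0 for i = 1,2, the product g₁ · g₂ = (q₁₂, p₁₂) satisfies ‖q₁₂‖ = 1 and q₁₂ᵀp₁₂ = 0. -/

import Mathlib

open Matrix

noncomputable section

/-- Cross-product (hat) matrix of a 3-vector: `vecHat v *ᵥ u = v ×₃ u`. -/
def vecHat (v : Fin 3 → ℝ) : Matrix (Fin 3) (Fin 3) ℝ :=
  !![0, -v 2, v 1; v 2, 0, -v 0; -v 1, v 0, 0]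

/-- The 4×3 matrix J(x): first row −x⃗ᵀ, lower 3×3 block x₀I₃ + x⃗^∧. -/
def Jmat (x : Fin 4 → ℝ) : Matrix (Fin 4) (Fin 3) ℝ :=
  Matrix.of fun i j =>
    if h : i = 0 then -x j.succ
    else (x 0 • (1 : Matrix (Fin 3) (Fin 3) ℝ) + vecHat fun k => x k.succ) (i.pred h) j

/-- The 4×3 matrix L(x): first row −x⃗ᵀ, lower 3×3 block x₀I₃ − x⃗^∧. -/
def Lmat (x : Fin 4 → ℝ) : Matrix (Fin 4) (Fin 3) ℝ :=
  Matrix.of fun i j =>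
    if h : i = 0 then -x j.succ
    else (x 0 • (1 : Matrix (Fin 3) (Fin 3) ℝ) - vecHat fun k => x k.succ) (i.pred h) j

/-- The 4×4 matrix Q(x) = [x J(x)] (first column x, remaining columns J(x)). -/
def Qmat (x : Fin 4 → ℝ) : Matrix (Fin 4) (Fin 4) ℝ :=
  Matrix.of fun i j => if h : j = 0 then x i else Jmat x i (j.pred h)

/-- The 4×4 matrix W(x) = [x L(x)] (first column x, remaining columns L(x)). -/
def Wmat (x : Fin 4 → ℝ) : Matrix (Fin 4) (Fin 4) ℝ :=
  Matrix.of fun i j => if h : j = 0 then x i else Lmat x i (j.pred h)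

/-- Euclidean norm on ℝ⁴: ‖x‖ = (xᵀx)^{1/2}. -/
def norm4 (x : Fin 4 → ℝ) : ℝ := Real.sqrt (x ⬝ᵥ x)

/-- The identity quaternion 1̄ = (1,0,0,0) ∈ ℝ⁴. -/
def one4 : Fin 4 → ℝ := ![1, 0, 0, 0]

/-- The binary operation on TS³ from Eq. (12) of the paper (with parameter λ). -/
def gmul (lam : ℝ) (g₁ g₂ : (Fin 4 → ℝ) × (Fin 4 → ℝ)) : (Fin 4 → ℝ) × (Fin 4 → ℝ) :=
  (Qmat g₁.1 *ᵥ g₂.1,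
    Qmat g₁.1 *ᵥ g₂.2 + Wmat g₂.1 *ᵥ g₁.2
      + lam • (Qmat g₁.1 *ᵥ (g₂.1 0 • g₂.1 - one4))
      + lam • (Wmat g₂.1 *ᵥ (g₁.1 0 • g₁.1 - one4))
      - lam • ((Qmat g₁.1 *ᵥ g₂.1) 0 • (Qmat g₁.1 *ᵥ g₂.1) - one4))

/-!
`Qmat x` and `Wmat x` are the matrices of left and right multiplication by the quaternion `x`, so
the multiplicativity of the quaternion norm makes the product of two unit vectors a unit vector.
After translating each fibre `T_q S³` by the tangent vector `λ (q₀ q - 1̄)`, the operation becomes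
the group law that differentiation of quaternion multiplication induces on `TS³`, namely
`(q₁, v₁) (q₂, v₂) = (q₁ q₂, q₁ v₂ + v₁ q₂)`. Differentiating `‖q₁ q₂‖² = ‖q₁‖² ‖q₂‖²` shows that
this law preserves tangency, and so do the translations.
-/

lemma real_inner_mul_left_mul_left {A : Type*} [NonUnitalNormedRing A] [NormMulClass A]
    [InnerProductSpace ℝ A] (a b c : A) :
    inner ℝ (a * b) (a * c) = ‖a‖ ^ 2 * inner ℝ b c := by
  -- Both sides are polarizations of `‖a * b‖ = ‖a‖ * ‖b‖`.
  simp only [real_inner_eq_norm_add_mul_self_sub_norm_mul_self_sub_norm_mul_self_div_two,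
    ← mul_add, norm_mul]
  ring

lemma real_inner_mul_right_mul_right {A : Type*} [NonUnitalNormedRing A] [NormMulClass A]
    [InnerProductSpace ℝ A] (a b c : A) :
    inner ℝ (b * a) (c * a) = ‖a‖ ^ 2 * inner ℝ b c := by
  simp only [real_inner_eq_norm_add_mul_self_sub_norm_mul_self_sub_norm_mul_self_div_two,
    ← add_mul, norm_mul]
  ring

/-- The quaternion `x₀ + x₁ i + x₂ j + x₃ k` with coordinate vector `x`, identifying the paper's
ℝ⁴ with Mathlib's quaternions. -/
@[simps]
def toQuaternion (x : Fin 4 → ℝ) : Quaternion ℝ :=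
  ⟨x 0, x 1, x 2, x 3⟩

lemma inner_toQuaternion (x y : Fin 4 → ℝ) :
    inner ℝ (toQuaternion x) (toQuaternion y) = x ⬝ᵥ y := by
  simp [Quaternion.inner_def, dotProduct, Fin.sum_univ_four]

lemma norm_toQuaternion (x : Fin 4 → ℝ) : ‖toQuaternion x‖ = norm4 x := by
  rw [norm_eq_sqrt_real_inner, inner_toQuaternion, norm4]

lemma Qmat_eq (x : Fin 4 → ℝ) : Qmat x =
    !![x 0, -x 1, -x 2, -x 3;
       x 1, x 0, -x 3, x 2;
       x 2, x 3, x 0, -x 1;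
       x 3, -x 2, x 1, x 0] := by
  ext i j
  fin_cases i <;> fin_cases j <;> simp [Qmat, Jmat, vecHat, Fin.pred, Matrix.one_apply]

lemma Wmat_eq (x : Fin 4 → ℝ) : Wmat x =
    !![x 0, -x 1, -x 2, -x 3;
       x 1, x 0, x 3, -x 2;
       x 2, -x 3, x 0, x 1;
       x 3, x 2, -x 1, x 0] := by
  ext i j
  fin_cases i <;> fin_cases j <;> simp [Wmat, Lmat, vecHat, Fin.pred, Matrix.one_apply]

lemma toQuaternion_Qmat_mulVec (x y : Fin 4 → ℝ) :
    toQuaternion (Qmat x *ᵥ y) = toQuaternion x * toQuaternion y := by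
  ext <;> simp [Qmat_eq, dotProduct, Fin.sum_univ_four] <;> ring

lemma toQuaternion_Wmat_mulVec (x y : Fin 4 → ℝ) :
    toQuaternion (Wmat x *ᵥ y) = toQuaternion y * toQuaternion x := by
  ext <;> simp [Wmat_eq, dotProduct, Fin.sum_univ_four] <;> ring

lemma norm4_Qmat_mulVec (x y : Fin 4 → ℝ) : norm4 (Qmat x *ᵥ y) = norm4 x * norm4 y := by
  simp only [← norm_toQuaternion, toQuaternion_Qmat_mulVec, norm_mul]

lemma Qmat_mulVec_dotProduct_Qmat_mulVec (x y z : Fin 4 → ℝ) :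
    (Qmat x *ᵥ y) ⬝ᵥ (Qmat x *ᵥ z) = norm4 x ^ 2 * (y ⬝ᵥ z) := by
  simp only [← inner_toQuaternion, ← norm_toQuaternion, toQuaternion_Qmat_mulVec,
    real_inner_mul_left_mul_left]

lemma Qmat_mulVec_dotProduct_Wmat_mulVec (x y z : Fin 4 → ℝ) :
    (Qmat x *ᵥ y) ⬝ᵥ (Wmat y *ᵥ z) = norm4 y ^ 2 * (x ⬝ᵥ z) := by
  simp only [← inner_toQuaternion, ← norm_toQuaternion, toQuaternion_Qmat_mulVec,
    toQuaternion_Wmat_mulVec, real_inner_mul_right_mul_right]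

/-- The vector `λ (q₀ q - 1̄)` by which `gmul` translates the fibre over `q`. For a unit vector `q`
it is `-λ` times the orthogonal projection of `1̄` onto the tangent space of `S³` at `q`. -/
def tangentShift (lam : ℝ) (q : Fin 4 → ℝ) : Fin 4 → ℝ :=
  lam • (q 0 • q - one4)

lemma dotProduct_tangentShift (lam : ℝ) {q : Fin 4 → ℝ} (hq : norm4 q = 1) :
    q ⬝ᵥ tangentShift lam q = 0 := by
  have hqq : q ⬝ᵥ q = 1 := Real.sqrt_eq_one.mp hq
  have hq_one : q ⬝ᵥ one4 = q 0 := by simp [one4, dotProduct, Fin.sum_univ_four]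
  simp only [tangentShift, dotProduct_smul, dotProduct_sub, hqq, hq_one, smul_eq_mul, mul_one,
    sub_self, mul_zero]

lemma gmul_snd_eq_sub_tangentShift (lam : ℝ) (g₁ g₂ : (Fin 4 → ℝ) × (Fin 4 → ℝ)) :
    (gmul lam g₁ g₂).2 =
      Qmat g₁.1 *ᵥ (g₂.2 + tangentShift lam g₂.1) + Wmat g₂.1 *ᵥ (g₁.2 + tangentShift lam g₁.1)
        - tangentShift lam (gmul lam g₁ g₂).1 := by
  simp only [gmul, tangentShift, mulVec_add, mulVec_smul]
  abel

/-- TS³ is closed under the binary operation: the product of two elements of TS³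
again satisfies ‖q₁₂‖ = 1 and q₁₂ᵀp₁₂ = 0. -/
theorem stmt16 (lam : ℝ) (hlam : 0 < lam)
    (q₁ p₁ q₂ p₂ : Fin 4 → ℝ)
    (hq₁ : norm4 q₁ = 1) (hp₁ : q₁ ⬝ᵥ p₁ = 0)
    (hq₂ : norm4 q₂ = 1) (hp₂ : q₂ ⬝ᵥ p₂ = 0) :
    norm4 (gmul lam (q₁, p₁) (q₂, p₂)).1 = 1 ∧
    (gmul lam (q₁, p₁) (q₂, p₂)).1 ⬝ᵥ (gmul lam (q₁, p₁) (q₂, p₂)).2 = 0 := by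
  have norm_gmul_fst : norm4 (gmul lam (q₁, p₁) (q₂, p₂)).1 = 1 := by
    rw [gmul, norm4_Qmat_mulVec, hq₁, hq₂, one_mul]
  have shifted₁ : q₁ ⬝ᵥ (p₁ + tangentShift lam q₁) = 0 := by
    rw [dotProduct_add, hp₁, dotProduct_tangentShift lam hq₁, add_zero]
  have shifted₂ : q₂ ⬝ᵥ (p₂ + tangentShift lam q₂) = 0 := by
    rw [dotProduct_add, hp₂, dotProduct_tangentShift lam hq₂, add_zero]
  refine ⟨norm_gmul_fst, ?_⟩
  rw [gmul_snd_eq_sub_tangentShift, dotProduct_sub, dotProduct_tangentShift lam norm_gmul_fst,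
    sub_zero, dotProduct_add]
  simp only [gmul, Qmat_mulVec_dotProduct_Qmat_mulVec, Qmat_mulVec_dotProduct_Wmat_mulVec,
    shifted₁, shifted₂, mul_zero, add_zero]
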